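/- arXiv:1911.11604 — 2 statements merged into one kernel-verified Lean document; each statement's English description precedes it below -/
import Mathlib

section
/- Let A, B ∈ F{x,y} be linear differential polynomials (total degree at most 1) with A ∉ F and B ∉ F. If A belongs to the differential ideal [B] and ord(A) > ord(B), then the linear differential curve (C,A) is not unirational: for every u ∈ E differentially transcendental over F there is no pair η₁, η₂ ∈ F⟨{u}⟩, not both in F, with I((η₁,η₂)) = [A]. -/
/-!
Suppose `η₁, η₂ ∈ F⟨u⟩` is a generic point of `[A]`. A linear element of the ideal `[B]`, with `B`
linear, is already an `F`-linear combination of the derivatives of `B`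
(`exists_linComb_of_mem_diffIdeal`), so `A = Σ c_k d^k B` and `v := B(η) ∈ F⟨u⟩` satisfies the
homogeneous linear differential equation `Σ c_k D^k v = 0`. No element of `F⟨u⟩` outside `F`
satisfies such an equation (`const_of_linear_ode`), so `v = b ∈ F`, and `B - b`, which vanishes
at `η`, lies in `[A]`. But it is nonzero, and a nonzero linear element of `[A]` has order at least
`ord A > ord B`, a contradiction.

The order estimates, both for differential polynomials and for rational functions of
`u, D u, D² u, …`, come from the commutation rule `[∂/∂x_{j+1}, d] = ∂/∂x_j`: each derivation
raises the order by one and keeps the leading coefficient (`partial_linComb`).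
-/

open MvPolynomial

noncomputable section

namespace DiffCurve

variable (F : Type*) {E : Type*} [Field F] [Field E] [Algebra F E]

/-- `F⟨S⟩`: the intermediate field of `E/F` generated by all iterated derivatives of
elements of `S`. -/
def genDF (D : Derivation ℤ E E) (S : Set E) : IntermediateField F E :=
  IntermediateField.adjoin F {x | ∃ s ∈ S, ∃ k : ℕ, (⇑D)^[k] s = x}

/-- `u` is differentially transcendental over `F`. -/
def DiffTrans (D : Derivation ℤ E E) (u : E) : Prop :=
  AlgebraicIndependent F (fun k : ℕ => (⇑D)^[k] u)

/-- Evaluation of `P ∈ F{u}` at `v`: the `F`-algebra map sending `u_k ↦ D^k v`. -/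
def evalD (D : Derivation ℤ E E) (v : E) : MvPolynomial ℕ F →ₐ[F] E :=
  aeval fun k => (⇑D)^[k] v

/-- Evaluation of `A ∈ F{x,y}` at `(η₁, η₂)`: `x_k ↦ D^k η₁`, `y_k ↦ D^k η₂`. -/
def evalD2 (D : Derivation ℤ E E) (η₁ η₂ : E) : MvPolynomial (Fin 2 × ℕ) F →ₐ[F] E :=
  aeval fun p => (⇑D)^[p.2] (if p.1 = 0 then η₁ else η₂)

variable {F}

/-- The order of `P ∈ F{u}`: the largest `k` such that `u_k` occurs (`⊥` if none). -/
def ordU (P : MvPolynomial ℕ F) : WithBot ℕ := P.vars.max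

/-- `ord_x` (for `i = 0`) resp. `ord_y` (for `i = 1`) of `A ∈ F{x,y}`. -/
def ordIdx (i : Fin 2) (A : MvPolynomial (Fin 2 × ℕ) F) : WithBot ℕ :=
  ((A.vars.filter fun v => v.1 = i).image Prod.snd).max

/-- `ord(A) = max(ord_x A, ord_y A)`. -/
def ordXY (A : MvPolynomial (Fin 2 × ℕ) F) : WithBot ℕ :=
  max (ordIdx 0 A) (ordIdx 1 A)

/-- The separant of `A` w.r.t. `x`: `∂A/∂x_s` where `s = ord_x A` (junk value `1` if
`ord_x A = ⊥`). -/
def sepX (A : MvPolynomial (Fin 2 × ℕ) F) : MvPolynomial (Fin 2 × ℕ) F :=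
  WithBot.recBotCoe 1 (fun s => pderiv ((0 : Fin 2), s) A) (ordIdx 0 A)

/-- The differential ideal `[A]` generated by `A`, for a derivation `d`. -/
def diffIdeal {R : Type*} [CommRing R] (d : Derivation ℤ R R) (A : R) : Ideal R :=
  Ideal.span (Set.range fun k : ℕ => (⇑d)^[k] A)

/-- The general component `sat(A) = [A] : S_A^∞` (as a set). -/
def satSet (dxy : Derivation ℤ (MvPolynomial (Fin 2 × ℕ) F) (MvPolynomial (Fin 2 × ℕ) F))
    (A : MvPolynomial (Fin 2 × ℕ) F) : Set (MvPolynomial (Fin 2 × ℕ) F) :=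
  {f | ∃ m : ℕ, sepX A ^ m * f ∈ diffIdeal dxy A}

variable (F)

/-- `(u, P₁, Q₁, P₂, Q₂)` is a differential rational parametrization of the differential
curve `(C, A)`. -/
def IsParam (D : Derivation ℤ E E)
    (dxy : Derivation ℤ (MvPolynomial (Fin 2 × ℕ) F) (MvPolynomial (Fin 2 × ℕ) F))
    (A : MvPolynomial (Fin 2 × ℕ) F) (u : E) (P₁ Q₁ P₂ Q₂ : MvPolynomial ℕ F) : Prop :=
  DiffTrans F D u ∧
  P₁ ≠ 0 ∧ Q₁ ≠ 0 ∧ IsRelPrime P₁ Q₁ ∧ P₂ ≠ 0 ∧ Q₂ ≠ 0 ∧ IsRelPrime P₂ Q₂ ∧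
  ¬ (evalD F D u P₁ / evalD F D u Q₁ ∈ (algebraMap F E).range ∧
     evalD F D u P₂ / evalD F D u Q₂ ∈ (algebraMap F E).range) ∧
  {B : MvPolynomial (Fin 2 × ℕ) F |
      evalD2 F D (evalD F D u P₁ / evalD F D u Q₁) (evalD F D u P₂ / evalD F D u Q₂) B = 0}
    = satSet dxy A

/-- A proper differential rational parametrization: additionally
`F⟨η₁, η₂⟩ = F⟨u⟩`. -/
def IsProperParam (D : Derivation ℤ E E)
    (dxy : Derivation ℤ (MvPolynomial (Fin 2 × ℕ) F) (MvPolynomial (Fin 2 × ℕ) F))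
    (A : MvPolynomial (Fin 2 × ℕ) F) (u : E) (P₁ Q₁ P₂ Q₂ : MvPolynomial ℕ F) : Prop :=
  IsParam F D dxy A u P₁ Q₁ P₂ Q₂ ∧
  genDF F D {evalD F D u P₁ / evalD F D u Q₁, evalD F D u P₂ / evalD F D u Q₂}
    = genDF F D {u}

/-- The projection `F{x,y,u} → F{x,y}` sending `u_k ↦ 0` and keeping `x_k`, `y_k`. -/
def projXY : MvPolynomial (Fin 3 × ℕ) F →ₐ[F] MvPolynomial (Fin 2 × ℕ) F :=
  aeval fun p => if h : (p.1 : ℕ) < 2 then X ((⟨p.1, h⟩ : Fin 2), p.2) else 0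

/-- The `i`-th row polynomial of the differential resultant matrix:
`d^{m₂}f₁, …, f₁, d^{m₁}f₂, …, f₂` where `f₁ = x₀·Q₁ − P₁`, `f₂ = y₀·Q₂ − P₂`
in `F{x,y,u}`. -/
def resRow (dxyu : Derivation ℤ (MvPolynomial (Fin 3 × ℕ) F) (MvPolynomial (Fin 3 × ℕ) F))
    (P₁ Q₁ P₂ Q₂ : MvPolynomial ℕ F) (m₁ m₂ : ℕ) (i : ℕ) : MvPolynomial (Fin 3 × ℕ) F :=
  if i ≤ m₂ then
    (⇑dxyu)^[m₂ - i] (X ((0 : Fin 3), 0) * rename (fun k => ((2 : Fin 3), k)) Q₁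
      - rename (fun k => ((2 : Fin 3), k)) P₁)
  else
    (⇑dxyu)^[m₁ + m₂ + 1 - i] (X ((1 : Fin 3), 0) * rename (fun k => ((2 : Fin 3), k)) Q₂
      - rename (fun k => ((2 : Fin 3), k)) P₂)

/-- The differential resultant `δ-Res(f₁, f₂) ∈ F{x,y}`: the determinant of the
`(m₁+m₂+2) × (m₁+m₂+2)` matrix whose rows are the coefficient vectors of
`d^{m₂}f₁, …, f₁, d^{m₁}f₂, …, f₂` w.r.t. `u_{m₁+m₂}, …, u_1, u_0, 1`. -/
def deltaRes (dxyu : Derivation ℤ (MvPolynomial (Fin 3 × ℕ) F) (MvPolynomial (Fin 3 × ℕ) F))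
    (P₁ Q₁ P₂ Q₂ : MvPolynomial ℕ F) (m₁ m₂ : ℕ) : MvPolynomial (Fin 2 × ℕ) F :=
  Matrix.det (Matrix.of fun i j : Fin (m₁ + m₂ + 2) =>
    if (j : ℕ) ≤ m₁ + m₂ then
      projXY F (pderiv ((2 : Fin 3), m₁ + m₂ - (j : ℕ)) (resRow F dxyu P₁ Q₁ P₂ Q₂ m₁ m₂ i))
    else projXY F (resRow F dxyu P₁ Q₁ P₂ Q₂ m₁ m₂ i))

/-- A linear homogeneous differential polynomial `L = Σ_k a_k u_k` in `F{u}`. -/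
def IsLinHom {F : Type*} [Field F] (L : MvPolynomial ℕ F) : Prop :=
  ∀ m ∈ L.support, ∃ k : ℕ, m = Finsupp.single k 1


/-! ### Linear combinations of iterated derivatives -/

section Triangular

variable {k R : Type*} [Field k] [CommRing R] [Algebra k R]

/-- The operators `pd j` behave like `∂/∂x_j`, which satisfy `[∂/∂x_{j+1}, d] = ∂/∂x_j`. If `w`
has order at most `s`, then the `n`-th derivative of `w` has order at most `s + n`, and
`∂/∂x_{s+n}` of it equals `∂/∂x_s` of `w`. -/
lemma partial_iterate (pd : ℕ → Derivation k R R) (d : R → R) (hd : d 0 = 0)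
    (hcomm : ∀ j f, pd (j + 1) (d f) = d (pd (j + 1) f) + pd j f)
    {w : R} {s : ℕ} (hw : ∀ j, s < j → pd j w = 0) (n : ℕ) :
    pd (s + n) (d^[n] w) = pd s w ∧ ∀ j, s + n < j → pd j (d^[n] w) = 0 := by
  induction n with
  | zero => exact ⟨rfl, hw⟩
  | succ n ih =>
    rw [Function.iterate_succ_apply']
    refine ⟨?_, fun j hj => ?_⟩
    · rw [← add_assoc, hcomm, ih.2 _ (by omega), ih.1, hd, zero_add]
    · obtain ⟨j, rfl⟩ : ∃ i, j = i + 1 := ⟨j - 1, by omega⟩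
      rw [hcomm, ih.2 _ (by omega), ih.2 _ (by omega), hd, zero_add]

/-- If `w` has order at most `s`, then for a nontrivial linear combination of its derivatives, with
`n` the last index in the combination, `pd (s + n)` is a nonzero multiple of `pd s w`. In
particular, if `w` has order exactly `s`, then the combination is nonzero and involves a variable
of order `s + n`. -/
lemma partial_linComb (pd : ℕ → Derivation k R R) (d : R → R) (hd : d 0 = 0)
    (hcomm : ∀ j f, pd (j + 1) (d f) = d (pd (j + 1) f) + pd j f)
    {w : R} {s : ℕ} (hw : ∀ j, s < j → pd j w = 0) {c : ℕ →₀ k} (hc : c ≠ 0) :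
    ∃ n, c n ≠ 0 ∧ pd (s + n) (c.sum fun i a => a • d^[i] w) = c n • pd s w := by
  have hne : c.support.Nonempty := Finsupp.support_nonempty_iff.2 hc
  refine ⟨c.support.max' hne, Finsupp.mem_support_iff.1 (c.support.max'_mem hne), ?_⟩
  rw [Finsupp.sum, map_sum, Finset.sum_eq_single (c.support.max' hne)]
  · rw [Derivation.map_smul, (partial_iterate pd d hd hcomm hw _).1]
  · intro i hi hin
    have hlt := lt_of_le_of_ne (c.support.le_max' i hi) hin
    rw [Derivation.map_smul, (partial_iterate pd d hd hcomm hw _).2 _ (by omega), smul_zero]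
  · intro h
    exact absurd (c.support.max'_mem hne) h

end Triangular

/-! ### Commutators of derivations of polynomial rings and their fraction fields -/

section Derivations

variable {k σ : Type*} [Field k]

lemma derivation_eq_of_C_X {M : Type*} [AddCommGroup M] [Module (MvPolynomial σ k) M]
    (d₁ d₂ : Derivation ℤ (MvPolynomial σ k) M)
    (hC : ∀ a, d₁ (C a) = d₂ (C a)) (hX : ∀ i, d₁ (X i) = d₂ (X i)) : d₁ = d₂ := by
  ext p
  induction p using MvPolynomial.induction_on with
  | C a => exact hC a
  | add p q hp hq => rw [map_add, map_add, hp, hq]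
  | mul_X p i hp => rw [Derivation.leibniz, Derivation.leibniz, hp, hX]

lemma pderiv_comm (i : Fin 2) {δF : Derivation ℤ k k}
    (d : Derivation ℤ (MvPolynomial (Fin 2 × ℕ) k) (MvPolynomial (Fin 2 × ℕ) k))
    (hdC : ∀ a : k, d (C a) = C (δF a)) (hdX : ∀ (i : Fin 2) (n : ℕ), d (X (i, n)) = X (i, n + 1))
    (j : ℕ) (f : MvPolynomial (Fin 2 × ℕ) k) :
    pderiv (i, j + 1) (d f) = d (pderiv (i, j + 1) f) + pderiv (i, j) f := by
  classical
  have h : ⁅(pderiv (R := k) (i, j + 1)).restrictScalars ℤ, d⁆ =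
      (pderiv (R := k) (i, j)).restrictScalars ℤ := by
    refine derivation_eq_of_C_X _ _ (fun a => ?_) (fun ⟨i', n⟩ => ?_)
    · simp [Derivation.commutator_apply, hdC]
    · simp only [Derivation.commutator_apply, Derivation.restrictScalars_apply, hdX, pderiv_X]
      by_cases h₁ : i' = i <;> by_cases h₂ : n = j <;> by_cases h₃ : n = j + 1 <;>
        simp [h₁, h₂, h₃]
  have := congrArg (fun e => e f) h
  simp only [Derivation.commutator_apply, Derivation.restrictScalars_apply] at this
  rw [← this]; ring

variable {K : Type*} [Field K] [Algebra k K] [Algebra (MvPolynomial ℕ k) K]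
  [IsScalarTower k (MvPolynomial ℕ k) K] [IsFractionRing (MvPolynomial ℕ k) K]

/-- The partial derivatives of `k[u_0, u_1, …]` extend to its fraction field: a derivation is the
second component of a homomorphism to dual numbers, and such homomorphisms extend because an
element of the dual numbers with invertible first component is invertible. -/
lemma exists_partial (j : ℕ) : ∃ pd : Derivation k K K,
    ∀ p : MvPolynomial ℕ k, pd (algebraMap _ K p) = algebraMap _ K (pderiv j p) := by
  let φ : MvPolynomial ℕ k →ₐ[k] TrivSqZeroExt K K :=
    aeval fun i => TrivSqZeroExt.inl (algebraMap _ K (X i : MvPolynomial ℕ k)) +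
      TrivSqZeroExt.inr (algebraMap _ K (pderiv j (X i : MvPolynomial ℕ k)))
  have hφ : ∀ p, (φ p).fst = algebraMap _ K p ∧ (φ p).snd = algebraMap _ K (pderiv j p) := by
    intro p
    induction p using MvPolynomial.induction_on with
    | C a =>
      have : φ (C a) = algebraMap k _ a := by simp [φ]
      rw [this, TrivSqZeroExt.algebraMap_eq_inl', TrivSqZeroExt.fst_inl, TrivSqZeroExt.snd_inl,
        pderiv_C, map_zero, ← MvPolynomial.algebraMap_eq, ← IsScalarTower.algebraMap_apply]
      exact ⟨rfl, rfl⟩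
    | add p q hp hq => simp [hp, hq]
    | mul_X p i hp =>
      have hX₁ : (φ (X i)).fst = algebraMap _ K (X i : MvPolynomial ℕ k) := by simp [φ]
      have hX₂ : (φ (X i)).snd = algebraMap _ K (pderiv j (X i : MvPolynomial ℕ k)) := by
        simp only [φ, aeval_X, TrivSqZeroExt.snd_add, TrivSqZeroExt.snd_inl,
          TrivSqZeroExt.snd_inr, zero_add]
      rw [map_mul, TrivSqZeroExt.fst_mul, TrivSqZeroExt.snd_mul, hX₁, hX₂, hp.1, hp.2,
        Derivation.leibniz, op_smul_eq_smul]
      simp only [smul_eq_mul, map_add, map_mul, true_and]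
  let Φ : K →ₐ[k] TrivSqZeroExt K K :=
    IsLocalization.liftAlgHom (M := nonZeroDivisors (MvPolynomial ℕ k)) (f := φ) (by
      intro y
      rw [TrivSqZeroExt.isUnit_iff_isUnit_fst, isUnit_iff_ne_zero]
      change (φ y).fst ≠ 0
      rw [(hφ _).1]
      exact IsFractionRing.to_map_ne_zero_of_mem_nonZeroDivisors y.2)
  have hΦ : ∀ p, Φ (algebraMap _ K p) = φ p := fun p => IsLocalization.lift_eq _ _
  have hfst : ∀ x, (Φ x).fst = x := by
    intro x
    obtain ⟨p, q, hq, rfl⟩ := IsFractionRing.div_surjective (A := MvPolynomial ℕ k) x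
    have h0 : algebraMap _ K q ≠ 0 := IsFractionRing.to_map_ne_zero_of_mem_nonZeroDivisors hq
    have h : ∀ p, (Φ (algebraMap _ K p)).fst = algebraMap _ K p := fun p => by
      rw [hΦ, (hφ p).1]
    have h1 := congrArg TrivSqZeroExt.fst (map_mul Φ (algebraMap _ K p / algebraMap _ K q)
      (algebraMap _ K q))
    rw [div_mul_cancel₀ _ h0, TrivSqZeroExt.fst_mul, h, h] at h1
    exact (eq_div_iff h0).2 h1.symm
  refine ⟨Derivation.mk' (R := k) { toFun := fun x => (Φ x).snd
                                    map_add' := by simp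
                                    map_smul' := by simp } ?_, ?_⟩
  · intro a b
    simp [hfst, mul_comm]
  · intro p
    simp [hΦ, (hφ p).2]

lemma derivation_eq_of_frac (d₁ d₂ : Derivation ℤ K K)
    (hC : ∀ a, d₁ (algebraMap k K a) = d₂ (algebraMap k K a))
    (hX : ∀ i : ℕ, d₁ (algebraMap _ K (X i : MvPolynomial ℕ k)) =
      d₂ (algebraMap _ K (X i : MvPolynomial ℕ k))) : d₁ = d₂ := by
  have h : ∀ p : MvPolynomial ℕ k, d₁ (algebraMap _ K p) = d₂ (algebraMap _ K p) := by
    intro p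
    induction p using MvPolynomial.induction_on with
    | C a =>
      rw [← MvPolynomial.algebraMap_eq, ← IsScalarTower.algebraMap_apply]
      exact hC a
    | add p q hp hq => rw [map_add, map_add, map_add, hp, hq]
    | mul_X p i hp => rw [map_mul, Derivation.leibniz, Derivation.leibniz, hp, hX]
  ext x
  obtain ⟨p, q, hq, rfl⟩ := IsFractionRing.div_surjective (A := MvPolynomial ℕ k) x
  rw [Derivation.leibniz_div, Derivation.leibniz_div, h, h]

end Derivations

/-! ### Elements of `F⟨u⟩` satisfying a linear differential equation over `F` -/

section RationalFunctions

variable {k : Type*} [Field k]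

/-- A polynomial cannot divide a nonzero partial derivative of itself, for degree reasons. -/
lemma pderiv_eq_zero_of_dvd {σ : Type*} {i : σ} {q : MvPolynomial σ k} (h : q ∣ pderiv i q) :
    pderiv i q = 0 := by
  classical
  by_contra hne
  obtain ⟨r, hr⟩ := h
  have hq : q ≠ 0 := by rintro rfl; simp at hne
  have hr0 : r ≠ 0 := by rintro rfl; simp [hr] at hne
  have hdeg : q.totalDegree ≤ (pderiv i q).totalDegree := by
    rw [hr, totalDegree_mul_of_isDomain hq hr0]; omega
  obtain ⟨m, hm, hmd⟩ := Finset.exists_mem_eq_sup (pderiv i q).support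
    (support_nonempty.2 hne) (fun s : σ →₀ ℕ => s.sum fun _ e => e)
  have hm' : m + Finsupp.single i 1 ∈ q.support := by
    rw [mem_support_iff, coeff_pderiv] at hm
    exact mem_support_iff.2 (left_ne_zero_of_mul hm)
  have h1 := le_totalDegree hm'
  rw [Finsupp.sum_add_index' (by simp) (by simp)] at h1
  simp only [Finsupp.sum_single_index] at h1
  have h2 : (pderiv i q).totalDegree = m.sum fun _ e => e := hmd
  omega

lemma eq_C_of_pderiv_eq_zero [CharZero k] {σ : Type*} {q : MvPolynomial σ k}
    (h : ∀ i, pderiv i q = 0) : q = C (coeff 0 q) := by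
  classical
  ext m
  rw [coeff_C]
  split_ifs with hm
  · rw [hm]
  · obtain ⟨i, hi⟩ : ∃ i, m i ≠ 0 := by
      by_contra! hall
      exact hm (Finsupp.ext fun i => (hall i).symm)
    have h1 := coeff_pderiv (i := i) q (m - Finsupp.single i 1)
    rw [h i, coeff_zero] at h1
    have h2 : m - Finsupp.single i 1 + Finsupp.single i 1 = m :=
      tsub_add_cancel_of_le (Finsupp.single_le_iff.2 (Nat.one_le_iff_ne_zero.2 hi))
    rw [h2] at h1
    exact (mul_eq_zero.1 h1.symm).resolve_right (Nat.cast_add_one_ne_zero _)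

variable {K : Type*} [Field K] [Algebra k K] [Algebra (MvPolynomial ℕ k) K]
  [IsScalarTower k (MvPolynomial ℕ k) K] [IsFractionRing (MvPolynomial ℕ k) K]

/-- In characteristic zero a rational function all of whose partial derivatives vanish is
constant. -/
lemma const_of_partial_eq_zero [CharZero k] (pd : ℕ → Derivation k K K)
    (hpd : ∀ j (p : MvPolynomial ℕ k), pd j (algebraMap _ K p) = algebraMap _ K (pderiv j p))
    {v : K} (hv : ∀ j, pd j v = 0) : ∃ c : k, algebraMap k K c = v := by
  obtain ⟨p, ⟨q, hq⟩, hrel, rfl⟩ :=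
    IsFractionRing.exists_reduced_fraction (A := MvPolynomial ℕ k) v
  have hq0 : algebraMap _ K q ≠ 0 := IsFractionRing.to_map_ne_zero_of_mem_nonZeroDivisors hq
  have hqne : q ≠ 0 := nonZeroDivisors.ne_zero hq
  have hcross : ∀ j, q * pderiv j p = p * pderiv j q := by
    intro j
    have h := hv j
    rw [IsFractionRing.mk'_eq_div, Derivation.leibniz_div, hpd, hpd, smul_eq_zero] at h
    have h := h.resolve_left (by simpa using hq0)
    rw [sub_eq_zero, smul_eq_mul, smul_eq_mul, ← map_mul, ← map_mul] at h
    exact IsFractionRing.injective _ K h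
  have hqd : ∀ j, pderiv j q = 0 := fun j =>
    pderiv_eq_zero_of_dvd (hrel.symm.dvd_of_dvd_mul_left ⟨_, (hcross j).symm⟩)
  have hpd : ∀ j, pderiv j p = 0 := fun j => by
    have h := hcross j
    rw [hqd, mul_zero] at h
    exact (mul_eq_zero.1 h).resolve_left hqne
  refine ⟨coeff 0 p / coeff 0 q, ?_⟩
  have hC : ∀ a : k, algebraMap k K a = algebraMap _ K (C a : MvPolynomial ℕ k) := fun a => by
    rw [← MvPolynomial.algebraMap_eq, ← IsScalarTower.algebraMap_apply]
  rw [IsFractionRing.mk'_eq_div, map_div₀, hC, hC, ← eq_C_of_pderiv_eq_zero hpd,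
    ← eq_C_of_pderiv_eq_zero hqd]

/-- A rational function `v` in `u_0, u_1, …`, where `u_i` is the `i`-th derivative of `u_0`,
satisfies no nontrivial homogeneous linear differential equation over `k` unless it is constant:
if `u_m` is the last variable on which `v` depends, then the equation, of order `n` say, depends
effectively on `u_{m+n}`. -/
lemma const_of_linear_ode_frac [CharZero k] {δF : Derivation ℤ k k} (Δ : Derivation ℤ K K)
    (hΔC : ∀ a, Δ (algebraMap k K a) = algebraMap k K (δF a))
    (hΔX : ∀ i : ℕ, Δ (algebraMap _ K (X i : MvPolynomial ℕ k)) =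
      algebraMap _ K (X (i + 1) : MvPolynomial ℕ k))
    {v : K} {c : ℕ →₀ k} (hc : c ≠ 0) (hv : (c.sum fun i a => a • (⇑Δ)^[i] v) = 0) :
    ∃ a : k, algebraMap k K a = v := by
  classical
  choose pd hpd using fun j => exists_partial (k := k) (K := K) j
  have hcomm : ∀ j f, pd (j + 1) (Δ f) = Δ (pd (j + 1) f) + pd j f := by
    intro j f
    have h : ⁅(pd (j + 1)).restrictScalars ℤ, Δ⁆ = (pd j).restrictScalars ℤ := by
      refine derivation_eq_of_frac (k := k) _ _ (fun a => ?_) (fun n => ?_)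
      · simp [Derivation.commutator_apply, hΔC]
      · simp only [Derivation.commutator_apply, Derivation.restrictScalars_apply, hΔX, hpd,
          pderiv_X]
        by_cases h₂ : n = j <;> by_cases h₃ : n = j + 1 <;>
          simp [h₂, h₃]
    have := congrArg (fun e => e f) h
    simp only [Derivation.commutator_apply, Derivation.restrictScalars_apply] at this
    rw [← this]; ring
  by_contra hconst
  have hex : ∃ j, pd j v ≠ 0 := by
    by_contra! h
    exact hconst (const_of_partial_eq_zero pd hpd h)
  obtain ⟨N, hN⟩ : ∃ N, ∀ j, N < j → pd j v = 0 := by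
    obtain ⟨p, q, -, rfl⟩ := IsFractionRing.div_surjective (A := MvPolynomial ℕ k) v
    refine ⟨(p.vars ∪ q.vars).sup id, fun j hj => ?_⟩
    have hj' : j ∉ p.vars ∪ q.vars := fun h =>
      absurd (Finset.le_sup (f := id) h) (not_le.2 hj)
    rw [Finset.mem_union, not_or] at hj'
    rw [Derivation.leibniz_div, hpd, hpd, pderiv_eq_zero_of_notMem_vars hj'.1,
      pderiv_eq_zero_of_notMem_vars hj'.2]
    simp
  have hm := Nat.findGreatest_spec (P := fun j => pd j v ≠ 0) (n := N)
    (by by_contra h; exact hex.choose_spec (hN _ (not_le.1 h))) hex.choose_spec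
  set m := Nat.findGreatest (fun j => pd j v ≠ 0) N
  have hmtop : ∀ j, m < j → pd j v = 0 := by
    intro j hj
    by_cases hjN : j ≤ N
    · exact not_not.1 (Nat.findGreatest_is_greatest hj hjN)
    · exact hN j (not_le.1 hjN)
  obtain ⟨n, hn, h⟩ := partial_linComb pd Δ (map_zero Δ) hcomm hmtop hc
  rw [hv, map_zero] at h
  exact (smul_ne_zero hn hm) h.symm

end RationalFunctions

section GeneratedField

variable {k L : Type*} [Field k] [Field L] [Algebra k L]

lemma mem_genDF_iterate {D : Derivation ℤ L L} {δF : Derivation ℤ k k}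
    (hD : ∀ a : k, D (algebraMap k L a) = algebraMap k L (δF a)) {S : Set L} {v : L}
    (hv : v ∈ genDF k D S) (n : ℕ) : (⇑D)^[n] v ∈ genDF k D S := by
  have hstep : ∀ w ∈ genDF k D S, D w ∈ genDF k D S := by
    intro w hw
    induction hw using IntermediateField.adjoin_induction with
    | mem x hx =>
      obtain ⟨s, hs, i, rfl⟩ := hx
      exact IntermediateField.subset_adjoin _ _ ⟨s, hs, i + 1, Function.iterate_succ_apply' _ _ _⟩
    | algebraMap x => rw [hD]; exact IntermediateField.algebraMap_mem _ _
    | add x y hx hy ihx ihy => rw [map_add]; exact add_mem ihx ihy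
    | inv x hx ih =>
      rw [Derivation.leibniz_inv, neg_smul, smul_eq_mul]
      exact neg_mem (mul_mem (pow_mem (inv_mem hx) 2) ih)
    | mul x y hx hy ihx ihy =>
      rw [Derivation.leibniz, smul_eq_mul, smul_eq_mul]
      exact add_mem (mul_mem hx ihy) (mul_mem hy ihx)
  induction n with
  | zero => exact hv
  | succ n ih => rw [Function.iterate_succ_apply']; exact hstep _ ih

/-- `const_of_linear_ode_frac` inside a differential extension field: an isomorphism `i` from the
field of rational functions in `u_0, u_1, …` onto `F⟨u⟩` carries the derivation back. -/
lemma const_of_linear_ode_of_algHom [CharZero k] {K : Type*} [Field K] [Algebra k K]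
    [Algebra (MvPolynomial ℕ k) K] [IsScalarTower k (MvPolynomial ℕ k) K]
    [IsFractionRing (MvPolynomial ℕ k) K] {D : Derivation ℤ L L} {δF : Derivation ℤ k k}
    (hD : ∀ a : k, D (algebraMap k L a) = algebraMap k L (δF a)) {u : L} (i : K →ₐ[k] L)
    (hi : ∀ p : MvPolynomial ℕ k, i (algebraMap _ K p) = aeval (fun n => (⇑D)^[n] u) p)
    {v : L} (hv : v ∈ genDF k D {u}) {c : ℕ →₀ k} (hc : c ≠ 0)
    (hode : (c.sum fun i a => a • (⇑D)^[i] v) = 0) : ∃ a : k, algebraMap k L a = v := by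
  have hset : {x | ∃ s ∈ ({u} : Set L), ∃ n : ℕ, (⇑D)^[n] s = x} =
      Set.range fun n : ℕ => (⇑D)^[n] u := by ext x; simp
  have hrange : i.fieldRange = genDF k D {u} := by
    rw [genDF, hset]
    exact IsFractionRing.algHom_fieldRange_eq_of_comp_eq_of_range_eq
      (g := aeval fun n : ℕ => (⇑D)^[n] u) (f := i) (RingHom.ext hi)
      (Algebra.adjoin_range_eq_range_aeval k _).symm
  have hsurj : ∀ w ∈ genDF k D {u}, ∃ x, i x = w := by
    intro w hw
    rw [← hrange] at hw
    exact hw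
  have hmem : ∀ x, i x ∈ genDF k D {u} := by
    intro x
    rw [← hrange]
    exact ⟨x, rfl⟩
  have hinj : Function.Injective i := i.toRingHom.injective
  choose Δ hΔ using fun x => hsurj _ (mem_genDF_iterate hD (hmem x) 1)
  simp only [Function.iterate_one] at hΔ
  let Δ' : Derivation ℤ K K := Derivation.mk'
    (AddMonoidHom.toIntLinearMap
      { toFun := Δ
        map_zero' := hinj (by simp [hΔ])
        map_add' := fun x y => hinj (by simp [hΔ]) }) (fun x y => hinj (by
          simp [hΔ]))
  have hΔ' : ∀ x, i (Δ' x) = D (i x) := hΔ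
  have hiter : ∀ n x, i ((⇑Δ')^[n] x) = (⇑D)^[n] (i x) := by
    intro n x
    induction n with
    | zero => rfl
    | succ n ih => rw [Function.iterate_succ_apply', Function.iterate_succ_apply', hΔ', ih]
  obtain ⟨x, rfl⟩ := hsurj v hv
  obtain ⟨a, ha⟩ := const_of_linear_ode_frac (k := k) (K := K) (δF := δF) (v := x) Δ'
    (fun a => hinj (by rw [hΔ', AlgHom.commutes, AlgHom.commutes, hD]))
    (fun n => hinj (by
      rw [hΔ', hi, hi, aeval_X, aeval_X, Function.iterate_succ_apply'])) hc
    (hinj (by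
      rw [map_zero, ← hode, Finsupp.sum, Finsupp.sum, map_sum]
      simp only [map_smul, hiter]))
  exact ⟨a, by rw [← ha, AlgHom.commutes]⟩

/-- A homogeneous linear differential equation over `F` has no solutions in `F⟨u⟩` outside `F`
when `u` is differentially transcendental. -/
lemma const_of_linear_ode [CharZero k] {D : Derivation ℤ L L} {δF : Derivation ℤ k k}
    (hD : ∀ a : k, D (algebraMap k L a) = algebraMap k L (δF a)) {u : L} (hu : DiffTrans k D u)
    {v : L} (hv : v ∈ genDF k D {u}) {c : ℕ →₀ k} (hc : c ≠ 0)
    (hode : (c.sum fun i a => a • (⇑D)^[i] v) = 0) : ∃ a : k, algebraMap k L a = v :=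
  const_of_linear_ode_of_algHom (K := FractionRing (MvPolynomial ℕ k)) hD
    (IsFractionRing.liftAlgHom (algebraicIndependent_iff_injective_aeval.2 hu))
    (fun _ => IsLocalization.lift_eq _ _) hv hc hode

end GeneratedField

/-! ### Linear differential polynomials -/

section Linear

variable {k : Type*} [Field k]

/-- The space of polynomials of total degree at most one. -/
def affineSpan (k σ : Type*) [Field k] : Submodule k (MvPolynomial σ k) :=
  Submodule.span k (insert 1 (Set.range X))

lemma eq_single_of_degree_eq_one {σ : Type*} {m : σ →₀ ℕ} (h : m.degree = 1) :
    ∃ i, m = Finsupp.single i 1 := by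
  classical
  obtain ⟨i, hi⟩ := (Finsupp.sum_eq_one_iff m).1 h
  exact ⟨i, hi⟩

lemma mem_affineSpan {σ : Type*} {p : MvPolynomial σ k} (hp : p.totalDegree ≤ 1) :
    p ∈ affineSpan k σ := by
  classical
  rw [p.as_sum]
  refine Submodule.sum_mem _ fun m hm => ?_
  have hm1 : m.degree ≤ 1 := (le_totalDegree hm).trans hp
  have hmon : monomial m (coeff m p) = coeff m p • monomial m (1 : k) := by
    rw [smul_monomial, smul_eq_mul, mul_one]
  rw [hmon]
  refine Submodule.smul_mem _ _ (Submodule.subset_span ?_)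
  obtain h | h : m.degree = 0 ∨ m.degree = 1 := by omega
  · left
    rw [(Finsupp.degree_eq_zero_iff m).1 h]
    rfl
  · right
    obtain ⟨i, rfl⟩ := eq_single_of_degree_eq_one h
    exact ⟨i, rfl⟩

lemma iterate_mem_affineSpan {δF : Derivation ℤ k k}
    {d : Derivation ℤ (MvPolynomial (Fin 2 × ℕ) k) (MvPolynomial (Fin 2 × ℕ) k)}
    (hdC : ∀ a : k, d (C a) = C (δF a)) (hdX : ∀ (i : Fin 2) (n : ℕ), d (X (i, n)) = X (i, n + 1))
    {p : MvPolynomial (Fin 2 × ℕ) k} (hp : p ∈ affineSpan k (Fin 2 × ℕ)) (n : ℕ) :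
    (⇑d)^[n] p ∈ affineSpan k (Fin 2 × ℕ) := by
  have hstep : ∀ q ∈ affineSpan k (Fin 2 × ℕ), d q ∈ affineSpan k (Fin 2 × ℕ) := by
    intro q hq
    induction hq using Submodule.span_induction with
    | mem x hx =>
      obtain rfl | ⟨⟨i, m⟩, rfl⟩ := hx
      · simp
      · rw [hdX]; exact Submodule.subset_span (.inr ⟨_, rfl⟩)
    | zero => simp
    | add x y _ _ hx hy => rw [map_add]; exact add_mem hx hy
    | smul a x hx ih =>
      rw [← C_mul', Derivation.leibniz, hdC, smul_eq_mul, smul_eq_mul, C_mul', mul_comm, C_mul']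
      exact add_mem (Submodule.smul_mem _ _ ih) (Submodule.smul_mem _ _ hx)
  induction n with
  | zero => exact hp
  | succ n ih => rw [Function.iterate_succ_apply']; exact hstep _ ih

/-- If a polynomial of degree at most one lies in the ideal generated by a set `W` of such
polynomials and `1` is not in the linear span of `W`, then it lies in that span: otherwise some
linear form vanishes on `W`, takes the value `1` at `1` and is nonzero at the polynomial, and the
substitution with the same values at the variables gives a common zero of `W` at which the
polynomial does not vanish. -/
lemma mem_span_of_mem_ideal {σ : Type*} {W : Set (MvPolynomial σ k)}
    (hW : W ⊆ affineSpan k σ) (h1 : (1 : MvPolynomial σ k) ∉ Submodule.span k W)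
    {p : MvPolynomial σ k} (hp : p ∈ affineSpan k σ) (hpI : p ∈ Ideal.span W) :
    p ∈ Submodule.span k W := by
  by_contra hpW
  obtain ⟨φ, hφW, hφ1, hφp⟩ : ∃ φ : MvPolynomial σ k →ₗ[k] k,
      (∀ w ∈ W, φ w = 0) ∧ φ 1 = 1 ∧ φ p ≠ 0 := by
    by_cases hp1 : p ∈ Submodule.span k W ⊔ Submodule.span k {1}
    · obtain ⟨f, hf1, hf⟩ := Submodule.exists_le_ker_of_notMem h1
      obtain ⟨w, hw, z, hz, rfl⟩ := Submodule.mem_sup.1 hp1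
      obtain ⟨c, rfl⟩ := Submodule.mem_span_singleton.1 hz
      have hc : c ≠ 0 := by rintro rfl; exact hpW (by simpa using hw)
      refine ⟨(f 1)⁻¹ • f, fun w hw => ?_, by simp [hf1], ?_⟩
      · have : f w = 0 := hf (Submodule.subset_span hw)
        simp [this]
      · have : f w = 0 := hf hw
        simp [this, hc, hf1]
    · obtain ⟨f, hfp, hf⟩ := Submodule.exists_le_ker_of_notMem hp1
      obtain ⟨g, hg1, hg⟩ := Submodule.exists_le_ker_of_notMem h1
      have hf1 : f 1 = 0 := hf (Submodule.mem_sup_right (Submodule.mem_span_singleton_self 1))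
      have hfW : ∀ w ∈ W, f w = 0 := fun w hw =>
        hf (Submodule.mem_sup_left (Submodule.subset_span hw))
      have hgW : ∀ w ∈ W, g w = 0 := fun w hw => hg (Submodule.subset_span hw)
      refine ⟨(g 1)⁻¹ • g + ((1 - (g 1)⁻¹ * g p) / f p) • f, fun w hw => ?_, ?_, ?_⟩
      · simp [hfW w hw, hgW w hw]
      · simp [hf1, hg1]
      · simp [hfp]
  have hagree : ∀ q ∈ affineSpan k σ, aeval (fun i => φ (X i)) q = φ q := by
    intro q hq
    induction hq using Submodule.span_induction with
    | mem x hx =>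
      obtain rfl | ⟨i, rfl⟩ := hx
      · simp [hφ1]
      · simp
    | zero => simp
    | add x y _ _ hx hy => rw [map_add, map_add, hx, hy]
    | smul a x _ hx => rw [map_smul, map_smul, hx]
  have hle : Ideal.span W ≤ RingHom.ker (aeval (R := k) fun i => φ (X i)) :=
    Ideal.span_le.2 fun w hw => (hagree w (hW hw)).trans (hφW w hw)
  exact hφp ((hagree p hp).symm.trans (hle hpI))

lemma pderiv_eq_zero_of_ord_lt {p : MvPolynomial (Fin 2 × ℕ) k} {j : ℕ} (h : ordXY p < j)
    (i : Fin 2) : pderiv (i, j) p = 0 := by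
  classical
  refine pderiv_eq_zero_of_notMem_vars fun hmem => not_le.2 h ?_
  have h1 : (j : WithBot ℕ) ≤ ordIdx i p :=
    Finset.le_max (Finset.mem_image.2 ⟨(i, j), Finset.mem_filter.2 ⟨hmem, rfl⟩, rfl⟩)
  fin_cases i
  · exact h1.trans (le_max_left _ _)
  · exact h1.trans (le_max_right _ _)

/-- A nonconstant polynomial of degree at most one and order `s` contains some `x_s` or `y_s`, with
nonzero constant coefficient `β`. -/
lemma exists_leading [CharZero k] {p : MvPolynomial (Fin 2 × ℕ) k} (hdeg : p.totalDegree ≤ 1)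
    (hp : ∀ c : k, p ≠ C c) :
    ∃ (i : Fin 2) (s : ℕ) (β : k), ordXY p = s ∧ β ≠ 0 ∧ pderiv (i, s) p = C β := by
  classical
  obtain ⟨s, hs⟩ : ∃ s : ℕ, ordXY p = s := by
    cases h : ordXY p with
    | coe s => exact ⟨s, rfl⟩
    | bot =>
      refine absurd (eq_C_of_pderiv_eq_zero fun ⟨i, j⟩ => ?_) (hp (coeff 0 p))
      exact pderiv_eq_zero_of_ord_lt (h ▸ WithBot.bot_lt_coe j) i
  obtain ⟨i, hi⟩ : ∃ i, ordIdx i p = s := by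
    rcases max_choice (ordIdx 0 p) (ordIdx 1 p) with h | h
    · exact ⟨0, h.symm.trans hs⟩
    · exact ⟨1, h.symm.trans hs⟩
  have hmem : (i, s) ∈ p.vars := by
    obtain ⟨⟨i', s'⟩, hvf, rfl⟩ := Finset.mem_image.1 (Finset.mem_of_max hi)
    obtain rfl := (Finset.mem_filter.1 hvf).2
    exact (Finset.mem_filter.1 hvf).1
  obtain ⟨m, hm, hmi⟩ := (mem_vars_iff_mem_support _).1 hmem
  have hsub : ∀ m' ∈ p.support, m' (i, s) ≠ 0 → m' = Finsupp.single (i, s) 1 := by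
    intro m' hm' hne
    have h1 : m'.degree ≤ 1 := (le_totalDegree hm').trans hdeg
    have h2 : m' (i, s) ≤ m'.degree := Finsupp.le_degree _ _
    obtain ⟨v, rfl⟩ := eq_single_of_degree_eq_one (m := m') (by omega)
    by_cases hvi : v = (i, s)
    · rw [hvi]
    · simp [hvi] at hne
  have hms := hsub m hm (Finsupp.mem_support_iff.1 hmi)
  subst hms
  refine ⟨i, s, coeff (Finsupp.single (i, s) 1) p, hs, mem_support_iff.1 hm, ?_⟩
  ext m'
  rw [coeff_pderiv, coeff_C]
  split_ifs with h
  · subst h; simp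
  · have : coeff (m' + Finsupp.single (i, s) 1) p = 0 := by
      by_contra hne
      exact h (Eq.symm (by simpa using hsub _ (mem_support_iff.2 hne) (by simp)))
    rw [this, zero_mul]

/-- A linear differential polynomial in `[p]`, with `p` linear and nonconstant, is a linear
combination of the derivatives of `p`. -/
lemma exists_linComb_of_mem_diffIdeal [CharZero k] {δF : Derivation ℤ k k}
    {d : Derivation ℤ (MvPolynomial (Fin 2 × ℕ) k) (MvPolynomial (Fin 2 × ℕ) k)}
    (hdC : ∀ a : k, d (C a) = C (δF a)) (hdX : ∀ (i : Fin 2) (n : ℕ), d (X (i, n)) = X (i, n + 1))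
    {p q : MvPolynomial (Fin 2 × ℕ) k} (hdeg : p.totalDegree ≤ 1) (hp : ∀ c : k, p ≠ C c)
    (hq : q.totalDegree ≤ 1) (hmem : q ∈ diffIdeal d p) :
    ∃ c : ℕ →₀ k, (c.sum fun i a => a • (⇑d)^[i] p) = q := by
  obtain ⟨i, s, β, hs, hβ, hpβ⟩ := exists_leading hdeg hp
  refine (Finsupp.mem_span_range_iff_exists_finsupp (R := k)).1
    (mem_span_of_mem_ideal ?_ ?_ (mem_affineSpan hq) hmem)
  · rintro _ ⟨n, rfl⟩
    exact iterate_mem_affineSpan hdC hdX (mem_affineSpan hdeg) n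
  · rw [Finsupp.mem_span_range_iff_exists_finsupp]
    rintro ⟨c, hc⟩
    have hc0 : c ≠ 0 := by rintro rfl; simp at hc
    obtain ⟨n, hn, h⟩ := partial_linComb (fun j => pderiv (i, j)) d (map_zero d)
      (pderiv_comm i d hdC hdX) (w := p) (s := s)
      (fun j hj => pderiv_eq_zero_of_ord_lt (by rw [hs]; exact_mod_cast hj) i) hc0
    rw [hc, pderiv_one, hpβ, eq_comm, smul_eq_zero] at h
    exact h.elim hn (fun h => hβ (by simpa using h))

lemma evalD2_iterate {L : Type*} [Field L] [Algebra k L] {D : Derivation ℤ L L}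
    {δF : Derivation ℤ k k} (hD : ∀ a : k, D (algebraMap k L a) = algebraMap k L (δF a))
    {d : Derivation ℤ (MvPolynomial (Fin 2 × ℕ) k) (MvPolynomial (Fin 2 × ℕ) k)}
    (hdC : ∀ a : k, d (C a) = C (δF a)) (hdX : ∀ (i : Fin 2) (n : ℕ), d (X (i, n)) = X (i, n + 1))
    (η₁ η₂ : L) (p : MvPolynomial (Fin 2 × ℕ) k) (n : ℕ) :
    evalD2 k D η₁ η₂ ((⇑d)^[n] p) = (⇑D)^[n] (evalD2 k D η₁ η₂ p) := by
  have hstep : ∀ q, evalD2 k D η₁ η₂ (d q) = D (evalD2 k D η₁ η₂ q) := by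
    intro q
    induction q using MvPolynomial.induction_on with
    | C a => simp [evalD2, hdC, hD]
    | add p q hp hq => simp only [map_add, hp, hq]
    | mul_X p i hp =>
      have hX : evalD2 k D η₁ η₂ (d (X i)) = D (evalD2 k D η₁ η₂ (X i)) := by
        obtain ⟨i, n⟩ := i
        rw [hdX]
        simp only [evalD2, aeval_X, Function.iterate_succ_apply']
      simp only [Derivation.leibniz, smul_eq_mul, map_add, map_mul, hp, hX]
  induction n with
  | zero => rfl
  | succ n ih => rw [Function.iterate_succ_apply', Function.iterate_succ_apply', hstep, ih]

end Linear

/-- if the linear differential polynomial `A` lies in the differential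
ideal `[B]` of a linear `B` with `ord A > ord B`, then the linear differential curve
`(C, A)` is not unirational. -/
theorem linear_in_diffIdeal_not_unirational [CharZero F]
    (δF : Derivation ℤ F F) (D : Derivation ℤ E E)
    (hD : ∀ a : F, D (algebraMap F E a) = algebraMap F E (δF a))
    (dxy : Derivation ℤ (MvPolynomial (Fin 2 × ℕ) F) (MvPolynomial (Fin 2 × ℕ) F))
    (hdxyC : ∀ a : F, dxy (C a) = C (δF a))
    (hdxyX : ∀ (i : Fin 2) (k : ℕ), dxy (X (i, k)) = X (i, k + 1))
    (A B : MvPolynomial (Fin 2 × ℕ) F)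
    (hAdeg : A.totalDegree ≤ 1) (hBdeg : B.totalDegree ≤ 1)
    (hAF : ∀ c : F, A ≠ C c) (hBF : ∀ c : F, B ≠ C c)
    (hAB : A ∈ diffIdeal dxy B) (hord : ordXY B < ordXY A) :
    ∀ u : E, DiffTrans F D u →
      ¬ ∃ η₁ η₂ : E, η₁ ∈ genDF F D {u} ∧ η₂ ∈ genDF F D {u} ∧
        ¬(η₁ ∈ (algebraMap F E).range ∧ η₂ ∈ (algebraMap F E).range) ∧
        {B' : MvPolynomial (Fin 2 × ℕ) F | evalD2 F D η₁ η₂ B' = 0}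
          = (diffIdeal dxy A : Set (MvPolynomial (Fin 2 × ℕ) F)) := by
  rintro u hu ⟨η₁, η₂, hη₁, hη₂, -, hI⟩
  have hmemI : ∀ P, evalD2 F D η₁ η₂ P = 0 ↔ P ∈ diffIdeal dxy A := fun P => by
    rw [← SetLike.mem_coe, ← hI]; rfl
  obtain ⟨c, hc⟩ := exists_linComb_of_mem_diffIdeal hdxyC hdxyX hBdeg hBF hAdeg hAB
  have hc0 : c ≠ 0 := by
    rintro rfl
    exact hAF 0 (by simpa using hc.symm)
  have hAη : evalD2 F D η₁ η₂ A = 0 := (hmemI A).2 (Ideal.subset_span ⟨0, rfl⟩)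
  have hv : evalD2 F D η₁ η₂ B ∈ genDF F D {u} := by
    have hle : (evalD2 F D η₁ η₂).range ≤ (genDF F D {u}).toSubalgebra := by
      rw [evalD2, ← Algebra.adjoin_range_eq_range_aeval]
      refine Algebra.adjoin_le ?_
      rintro _ ⟨⟨i, n⟩, rfl⟩
      refine mem_genDF_iterate hD ?_ n
      dsimp only
      split_ifs
      · exact hη₁
      · exact hη₂
    exact hle ⟨B, rfl⟩
  obtain ⟨b, hb⟩ := const_of_linear_ode hD hu hv hc0 (by
    rw [← hAη, ← hc, Finsupp.sum, Finsupp.sum, map_sum]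
    simp only [map_smul, evalD2_iterate hD hdxyC hdxyX])
  -- `B - b` vanishes at the generic point, hence lies in `[A]`, although its order is too small.
  have hBb : B - C b ∈ diffIdeal dxy A := (hmemI _).1 (by
    rw [map_sub, ← hb, sub_eq_zero]
    simp [evalD2])
  obtain ⟨e, he⟩ := exists_linComb_of_mem_diffIdeal hdxyC hdxyX hAdeg hAF
    ((totalDegree_sub_C_le _ _).trans hBdeg) hBb
  have he0 : e ≠ 0 := by
    rintro rfl
    exact hBF b (sub_eq_zero.1 (by simpa using he.symm))
  obtain ⟨i, r, α, hr, hα, hAα⟩ := exists_leading hAdeg hAF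
  obtain ⟨n, hn, h⟩ := partial_linComb (fun j => pderiv (i, j)) dxy (map_zero dxy)
    (pderiv_comm i dxy hdxyC hdxyX) (w := A) (s := r)
    (fun j hj => pderiv_eq_zero_of_ord_lt (by rw [hr]; exact_mod_cast hj) i) he0
  have hBlt : ordXY B < ((r + n : ℕ) : WithBot ℕ) :=
    lt_of_lt_of_le (hr ▸ hord) (by exact_mod_cast Nat.le_add_right r n)
  rw [he, hAα, map_sub, pderiv_C, pderiv_eq_zero_of_ord_lt hBlt, sub_zero, eq_comm,
    smul_eq_zero] at h
  exact h.elim hn (fun h => hα (by simpa using h))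
end DiffCurve
end
end

section
/- Let A ∈ F{x,y} be irreducible with ord_x(A) ≥ 0 and ord_y(A) ≥ 0. Let (u, P₁, Q₁, P₂, Q₂) be ANY differential rational parametrization of the differential curve (C,A) with nᵢ := max(ord Pᵢ, ord Qᵢ) ≥ 0 for i = 1, 2, and let (u, P₁*, Q₁*, P₂*, Q₂*) be a PROPER differential rational parametrization of (C,A) with mᵢ := max(ord Pᵢ*, ord Qᵢ*) ≥ 0. Then m₁ ≤ n₁ and m₂ ≤ n₂; in particular max(m₁, m₂) ≤ max(n₁, n₂), i.e., proper parametrizations have minimal order among all differential rational parametrizations of (C,A). -/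
/-!
Let `a = (a₁, a₂)` be the proper generic point and `b = (b₁, b₂)` the other one. They have the same
vanishing ideal, so `aᵢ ↦ bᵢ` defines a differential `F`-isomorphism `F⟨a⟩ ≅ F⟨b⟩`. By properness `u`
lies in `F⟨a⟩`; let `w ∈ F⟨b⟩ ⊆ F⟨u⟩` be its image. Then `w` is again differentially transcendental
and `bᵢ = Pᵢ'(w)/Qᵢ'(w)`: the given parametrization is the proper one composed with the substitution
`u ↦ w`. The isomorphism is handled through its graph `Corr`, and `w` is produced by `exists_corr`.

Composition adds orders. Let `∂_k` be the partial derivative with respect to `D^k u`, and let `l` be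
the order of `w` in `u`, i.e. the largest `k` with `∂_k w ≠ 0`. From `[∂_{k+1}, D] = ∂_k` on `F⟨u⟩`
(`partial_comm`) one gets `∂_{l+j}(D^j w) = ∂_l w ≠ 0` and `∂_k(D^j w) = 0` for `k > l + j`
(`partial_iterate`). The chain rule then shows that `Pᵢ'(w)/Qᵢ'(w)` has order `mᵢ + l` in `u`. Since
`bᵢ = Pᵢ(u)/Qᵢ(u)` has order `nᵢ`, it follows that `mᵢ ≤ nᵢ` (`order_le`). That a reduced fraction of
order `m` really depends on `u_m` uses coprimality and characteristic zero (`pderiv_cross`). The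
derivations `∂_k` exist on all of `E` because derivations extend along field extensions in
characteristic zero (`exists_partial`).
-/

open MvPolynomial

noncomputable section

namespace DiffCurve

variable (F : Type*) {E : Type*} [Field F] [Field E] [Algebra F E]

variable {F}

variable (F)

/-! ### Reduced fractions and formal partial derivatives -/

lemma pderiv_eq_zero_iff [CharZero F] {σ : Type*} (n : σ) (P : MvPolynomial σ F) :
    pderiv n P = 0 ↔ n ∉ P.vars := by
  refine ⟨fun h hn => ?_, pderiv_eq_zero_of_notMem_vars⟩
  obtain ⟨m, hm, hnm⟩ := (mem_vars_iff_mem_support n).1 hn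
  have hmn : m n ≠ 0 := Finsupp.mem_support_iff.1 hnm
  have := coeff_pderiv (i := n) P (m - Finsupp.single n 1)
  rw [h, tsub_add_cancel_of_le (by simpa using Nat.one_le_iff_ne_zero.2 hmn)] at this
  simp only [coeff_zero, zero_eq_mul] at this
  rcases this with h | h
  · exact (mem_support_iff.1 hm) h
  · exact Nat.cast_add_one_ne_zero _ h

/-- The degree in the variable `n` drops under `∂/∂X_n`, so divisibility forces vanishing. -/
lemma eq_zero_of_dvd_pderiv [CharZero F] {σ : Type*} (n : σ) (Q : MvPolynomial σ F)
    (h : Q ∣ pderiv n Q) : pderiv n Q = 0 := by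
  obtain ⟨R, hR⟩ := h
  by_contra h0
  have hQ : Q ≠ 0 := by rintro rfl; simp at h0
  have hR0 : R ≠ 0 := by rintro rfl; simp at hR; exact h0 hR
  have h1 : degreeOf n (pderiv n Q) = degreeOf n Q + degreeOf n R := by
    rw [hR, degreeOf_mul_eq hQ hR0]
  obtain ⟨m, hm, hmd⟩ : ∃ m ∈ (pderiv n Q).support, m n = degreeOf n (pderiv n Q) := by
    rw [degreeOf_eq_sup]
    obtain ⟨m, hm, h⟩ := Finset.exists_mem_eq_sup (pderiv n Q).support
      (support_nonempty.2 h0) (fun m => m n)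
    exact ⟨m, hm, h.symm⟩
  -- A monomial of `∂Q` of maximal degree in `X_n` comes from one of `Q` with degree one higher.
  have h2 : m + Finsupp.single n 1 ∈ Q.support := by
    rw [mem_support_iff, coeff_pderiv] at hm
    exact mem_support_iff.2 (left_ne_zero_of_mul hm)
  have h3 := monomial_le_degreeOf n h2
  simp at h3
  omega

/-- A reduced fraction `P / Q` whose formal `∂/∂X_n` vanishes does not involve `X_n`. -/
lemma pderiv_cross [CharZero F] {σ : Type*} (n : σ) {P Q : MvPolynomial σ F}
    (h : IsRelPrime P Q) (he : Q * pderiv n P = P * pderiv n Q) :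
    n ∉ P.vars ∧ n ∉ Q.vars := by
  rw [← pderiv_eq_zero_iff, ← pderiv_eq_zero_iff]
  exact ⟨eq_zero_of_dvd_pderiv F n P (h.dvd_of_dvd_mul_left ⟨_, he⟩),
    eq_zero_of_dvd_pderiv F n Q (h.symm.dvd_of_dvd_mul_left ⟨_, he.symm⟩)⟩

/-- Chain rule for `P(v)` when `d` kills every occurring `D^j v` except possibly `D^n v`. -/
lemma derivation_evalD (D : Derivation ℤ E E) (d : Derivation F E E) (v : E) (n : ℕ)
    (P : MvPolynomial ℕ F) (h : ∀ j ∈ P.vars, j ≠ n → d ((⇑D)^[j] v) = 0) :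
    d (evalD F D v P) = evalD F D v (pderiv n P) * d ((⇑D)^[n] v) := by
  let : Algebra (MvPolynomial ℕ F) E := (evalD F D v).toAlgebra
  have hX : ∀ j, evalD F D v (X j) = (⇑D)^[j] v := fun j => by simp [evalD]
  have : IsScalarTower F (MvPolynomial ℕ F) E :=
    IsScalarTower.of_algebraMap_eq fun a => ((evalD F D v).commutes a).symm
  -- Both sides are derivations from `F{u}` to `E`, viewed as an `F{u}`-module through evaluation
  -- at `v`, so it suffices to compare them on the occurring variables.
  let D₁ : Derivation F (MvPolynomial ℕ F) E := d.compAlgebraMap (MvPolynomial ℕ F)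
  let D₂ : Derivation F (MvPolynomial ℕ F) E :=
    (LinearMap.toSpanSingleton (MvPolynomial ℕ F) E (d ((⇑D)^[n] v))).compDer (pderiv n)
  have h1 : ∀ p, D₁ p = d (evalD F D v p) := fun p => rfl
  have h2 : ∀ p, D₂ p = evalD F D v (pderiv n p) * d ((⇑D)^[n] v) := fun p => rfl
  rw [← h1, ← h2]
  refine derivation_eq_of_forall_mem_vars fun j hj => ?_
  rw [h1, h2, hX]
  by_cases hjn : j = n
  · subst hjn; simp
  · rw [h j hj hjn, pderiv_X_of_ne hjn]; simp

/-- For `v` differentially transcendental and `P / Q` reduced, a derivation that sees only `D^n v`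
among the relevant derivatives of `v` detects whether the variable `u_n` occurs in `P / Q`. -/
lemma derivation_quot_eq_zero_iff [CharZero F] (D : Derivation ℤ E E) (d : Derivation F E E)
    (v : E) (hv : DiffTrans F D v) (n : ℕ) (P Q : MvPolynomial ℕ F) (hQ : Q ≠ 0)
    (hPQ : IsRelPrime P Q) (hn : d ((⇑D)^[n] v) ≠ 0)
    (h : ∀ j ∈ P.vars ∪ Q.vars, j ≠ n → d ((⇑D)^[j] v) = 0) :
    d (evalD F D v P / evalD F D v Q) = 0 ↔ n ∉ P.vars ∪ Q.vars := by
  have hinj : Function.Injective (evalD F D v) := hv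
  have hQv : evalD F D v Q ≠ 0 := (map_ne_zero_iff _ hinj).2 hQ
  rw [Derivation.leibniz_div, derivation_evalD F D d v n P fun j hj => h j (by simp [hj]),
    derivation_evalD F D d v n Q fun j hj => h j (by simp [hj])]
  simp only [Finset.mem_union, not_or, smul_eq_mul]
  constructor
  · intro h0
    apply pderiv_cross F n hPQ
    apply hinj
    rw [map_mul, map_mul, ← sub_eq_zero]
    have := (mul_eq_zero.1 h0).resolve_left (by simpa using hQv)
    apply (mul_eq_zero.1 _).resolve_right hn
    rw [← this]; ring
  · rintro ⟨h1, h2⟩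
    simp [pderiv_eq_zero_of_notMem_vars h1, pderiv_eq_zero_of_notMem_vars h2]

/-! ### Differentially generated subfields -/

lemma genDF_closed {δF : Derivation ℤ F F} {D : Derivation ℤ E E}
    (hD : ∀ a : F, D (algebraMap F E a) = algebraMap F E (δF a)) (S : Set E) {x : E}
    (hx : x ∈ genDF F D S) : D x ∈ genDF F D S := by
  unfold genDF at hx
  induction hx using IntermediateField.adjoin_induction with
  | mem x hx =>
    obtain ⟨s, hs, k, rfl⟩ := hx
    exact IntermediateField.subset_adjoin _ _ ⟨s, hs, k + 1, Function.iterate_succ_apply' _ _ _⟩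
  | algebraMap x => rw [hD]; exact (genDF F D S).algebraMap_mem _
  | add x y hx hy hx' hy' => rw [map_add]; exact add_mem hx' hy'
  | inv x hx hx' =>
    rw [Derivation.leibniz_inv]
    exact mul_mem (neg_mem (pow_mem (inv_mem hx) _)) hx'
  | mul x y hx hy hx' hy' =>
    rw [Derivation.leibniz]
    exact add_mem (mul_mem hx hy') (mul_mem hy hx')

lemma iterate_mem_genDF {δF : Derivation ℤ F F} {D : Derivation ℤ E E}
    (hD : ∀ a : F, D (algebraMap F E a) = algebraMap F E (δF a)) (S : Set E) {x : E}
    (hx : x ∈ genDF F D S) (k : ℕ) : (⇑D)^[k] x ∈ genDF F D S := by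
  induction k with
  | zero => exact hx
  | succ k ih => rw [Function.iterate_succ_apply']; exact genDF_closed F hD S ih

lemma genDF_le {δF : Derivation ℤ F F} {D : Derivation ℤ E E}
    (hD : ∀ a : F, D (algebraMap F E a) = algebraMap F E (δF a)) (S T : Set E)
    (h : ∀ s ∈ S, s ∈ genDF F D T) : genDF F D S ≤ genDF F D T := by
  unfold genDF
  rw [IntermediateField.adjoin_le_iff]
  rintro _ ⟨s, hs, k, rfl⟩
  exact iterate_mem_genDF F hD T (h s hs) k

lemma mem_genDF_singleton {D : Derivation ℤ E E} {u w : E} (hu : DiffTrans F D u)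
    (hw : w ∈ genDF F D {u}) : ∃ P Q : MvPolynomial ℕ F, Q ≠ 0 ∧ IsRelPrime P Q ∧
      w = evalD F D u P / evalD F D u Q := by
  have hinj : Function.Injective (evalD F D u) := hu
  have hset : {x | ∃ s ∈ ({u} : Set E), ∃ k : ℕ, (⇑D)^[k] s = x}
      = Set.range fun k => (⇑D)^[k] u := by
    ext x; simp
  rw [genDF, hset, IntermediateField.mem_adjoin_range_iff] at hw
  obtain ⟨P, Q, rfl⟩ := hw
  by_cases hQ : Q = 0
  · exact ⟨0, 1, one_ne_zero, isRelPrime_one_right, by simp [hQ]⟩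
  obtain ⟨P', Q', c, hr, rfl, rfl⟩ := UniqueFactorizationMonoid.exists_reduced_factors' P Q hQ
  refine ⟨P', Q', right_ne_zero_of_mul hQ, hr, ?_⟩
  have hc := (map_ne_zero_iff _ hinj).2 (left_ne_zero_of_mul hQ)
  change evalD F D u _ / evalD F D u _ = _
  rw [map_mul, map_mul, mul_div_mul_left _ _ hc]

/-! ### Partial derivatives on a field extension -/

/-- The commutation rule `[∂_{k+1}, D] = ∂_k` on `F⟨u⟩`, where `∂_k = ∂/∂(D^k u)`. -/
lemma partial_comm {δF : Derivation ℤ F F} {D : Derivation ℤ E E}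
    (hD : ∀ a : F, D (algebraMap F E a) = algebraMap F E (δF a)) {u : E}
    {d : ℕ → Derivation F E E} (h1 : ∀ k, d k ((⇑D)^[k] u) = 1)
    (h0 : ∀ k j, j ≠ k → d k ((⇑D)^[j] u) = 0) (k : ℕ) {x : E} (hx : x ∈ genDF F D {u}) :
    d (k + 1) (D x) = D (d (k + 1) x) + d k x := by
  unfold genDF at hx
  induction hx using IntermediateField.adjoin_induction with
  | mem x hx =>
    obtain ⟨s, hs, j, rfl⟩ := hx
    rw [Set.mem_singleton_iff.1 hs, ← Function.iterate_succ_apply' D]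
    have hz : D (d (k + 1) ((⇑D)^[j] u)) = 0 := by
      by_cases hj : j = k + 1
      · rw [hj, h1]; simp
      · rw [h0 _ _ hj]; simp
    rw [hz, zero_add]
    by_cases hj : j = k
    · rw [hj, h1, h1]
    · rw [h0 _ _ hj, h0 _ _ (by omega)]
  | algebraMap x => simp [hD]
  | add x y hx hy hx' hy' => simp only [map_add, hx', hy']; ring
  | inv x hx hx' =>
    by_cases h : x = 0
    · simp [h]
    simp only [Derivation.leibniz_inv, Derivation.leibniz, Derivation.leibniz_pow, map_neg, smul_eq_mul, hx',
      nsmul_eq_mul, neg_mul]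
    field_simp
    push_cast
    ring
  | mul x y hx hy hx' hy' =>
    simp only [Derivation.leibniz, map_add, smul_eq_mul, hx', hy']; ring

open scoped IntermediateField.algebraAdjoinAdjoin in
/-- In characteristic zero, a derivation can be prescribed arbitrarily on a transcendence basis: `E`
is formally smooth over the polynomial subalgebra `F[v]`, so the `F[v]`-algebra map
`v i ↦ v i + c i ε` into the dual numbers lifts to `E`, and its `ε`-part is the derivation. -/
lemma exists_derivation_of_basis [CharZero F] {ι : Type*} {v : ι → E}
    (hv : IsTranscendenceBasis F v) (c : ι → E) :
    ∃ d : Derivation F E E, ∀ i, d (v i) = c i := by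
  let R := Algebra.adjoin F (Set.range v)
  let L := IntermediateField.adjoin F (Set.range v)
  have : Algebra.FormallySmooth R E := by
    -- `L` is a localization of `R`, and `E / L` is algebraic, hence separable.
    have h1 : Algebra.FormallySmooth R L :=
      .of_isLocalization (nonZeroDivisors R)
    have : Algebra.IsAlgebraic L E := hv.isAlgebraic_field
    have h2 : Algebra.FormallyEtale L E := Algebra.FormallyEtale.of_isSeparable _ E
    exact .comp _ L _
  let τ : R →ₐ[F] DualNumber E :=
    (aeval fun i => (TrivSqZeroExt.inl (v i) + TrivSqZeroExt.inr (c i) : DualNumber E)).comp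
      hv.1.aevalEquiv.symm.toAlgHom
  have hτv : ∀ i (h : v i ∈ R),
      τ ⟨v i, h⟩ = TrivSqZeroExt.inl (v i) + TrivSqZeroExt.inr (c i) := by
    intro i h
    have : hv.1.aevalEquiv.symm ⟨v i, h⟩ = X i := by
      rw [AlgEquiv.symm_apply_eq]; ext; simp
    simp [τ, this]
  have hτf : ∀ r : R, (τ r).fst = r := by
    have : ((TrivSqZeroExt.fstHom F E E).comp τ).comp hv.1.aevalEquiv.toAlgHom
        = R.val.comp hv.1.aevalEquiv.toAlgHom := by
      ext i; simp [τ]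
    intro r
    obtain ⟨p, rfl⟩ := hv.1.aevalEquiv.surjective r
    exact DFunLike.congr_fun this p
  let : Algebra R (DualNumber E) := τ.toAlgebra
  let g : DualNumber E →ₐ[R] E :=
    { (TrivSqZeroExt.fstHom F E E).toRingHom with commutes' := fun r => hτf r }
  have hg : Function.Surjective g := fun x => ⟨TrivSqZeroExt.inl x, rfl⟩
  have hker : IsNilpotent (RingHom.ker (g : DualNumber E →+* E)) :=
    ⟨2, TrivSqZeroExt.kerIdeal_sq E E⟩
  let σ := Algebra.FormallySmooth.liftOfSurjective (AlgHom.id R E) g hg hker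
  have hσ : ∀ x, (σ x).fst = x := fun x =>
    Algebra.FormallySmooth.liftOfSurjective_apply (AlgHom.id R E) g hg hker x
  have hσR : ∀ r : R, σ (r : E) = τ r := fun r => σ.commutes r
  have hσF : ∀ a : F, σ (algebraMap F E a) = algebraMap F _ a := fun a => by
    rw [← τ.commutes a]; exact hσR (algebraMap F R a)
  refine ⟨Derivation.mk' (R := F)
    { toFun := fun x => (σ x).snd, map_add' := by simp, map_smul' := fun a x => ?_ } ?_, ?_⟩
  · rw [Algebra.smul_def, map_mul, hσF, ← Algebra.smul_def]; simp
  · intro a b; simp [hσ, mul_comm]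
  · intro i
    have hi : v i ∈ R := Algebra.subset_adjoin ⟨i, rfl⟩
    have := hσR ⟨v i, hi⟩
    simp only [hτv] at this
    simp [this]

/-- The partial derivative `∂/∂(v i)` on `F(v)`, extended to all of `E`. -/
lemma exists_partial_s18 [CharZero F] {ι : Type*} {v : ι → E}
    (hv : AlgebraicIndependent F v) (i : ι) :
    ∃ d : Derivation F E E, d (v i) = 1 ∧ ∀ j, j ≠ i → d (v j) = 0 := by
  classical
  obtain ⟨t, hst, ht⟩ := exists_isTranscendenceBasis_superset (R := F) (s := Set.range v)
    hv.coe_range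
  obtain ⟨d, hd⟩ := exists_derivation_of_basis F ht (fun x => if (x : E) = v i then 1 else 0)
  refine ⟨d, ?_, fun j hj => ?_⟩
  · simpa using hd ⟨v i, hst ⟨i, rfl⟩⟩
  · simpa [hv.injective.eq_iff, hj] using hd ⟨v j, hst ⟨j, rfl⟩⟩

/-! ### Orders of composed differential rational functions -/

/-- If `w ∈ F⟨u⟩` has order at most `l` in `u`, then `D^j w` has order at most `l + j`, and
`∂_{l+j}(D^j w) = ∂_l w`. -/
lemma partial_iterate_s18 {δF : Derivation ℤ F F} {D : Derivation ℤ E E}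
    (hD : ∀ a : F, D (algebraMap F E a) = algebraMap F E (δF a)) {u : E}
    {d : ℕ → Derivation F E E} (h1 : ∀ k, d k ((⇑D)^[k] u) = 1)
    (h0 : ∀ k j, j ≠ k → d k ((⇑D)^[j] u) = 0) {w : E} (hw : w ∈ genDF F D {u}) {l : ℕ}
    (hl : ∀ k, l < k → d k w = 0) (j : ℕ) :
    d (l + j) ((⇑D)^[j] w) = d l w ∧ ∀ k, l + j < k → d k ((⇑D)^[j] w) = 0 := by
  induction j with
  | zero => exact ⟨rfl, hl⟩
  | succ j ih =>
    have hc := fun k => partial_comm F hD h1 h0 k (iterate_mem_genDF F hD {u} hw j)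
    rw [Function.iterate_succ_apply']
    refine ⟨?_, fun k hk => ?_⟩
    · rw [← add_assoc, hc, ih.2 _ (Nat.lt_succ_self _), ih.1, map_zero, zero_add]
    · obtain ⟨k, rfl⟩ : ∃ k', k = k' + 1 := ⟨k - 1, by omega⟩
      rw [hc, ih.2 _ (by omega), ih.2 _ (by omega), map_zero, zero_add]

lemma mem_or_of_max {P Q : MvPolynomial ℕ F} {n : ℕ}
    (h : max (ordU P) (ordU Q) = (n : WithBot ℕ)) :
    n ∈ P.vars ∪ Q.vars ∧ ∀ k ∈ P.vars ∪ Q.vars, k ≤ n := by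
  have h' : (P.vars ∪ Q.vars).max = (n : WithBot ℕ) := by
    rw [← h]; exact Finset.sup_union
  exact ⟨Finset.mem_of_max h', fun k hk => Finset.le_max_of_eq hk h'⟩

/-- If `P(u)/Q(u) = P'(w)/Q'(w)` are reduced, with `w ∈ F⟨u⟩` differentially transcendental, then the
order in `w` is at most the order in `u`; the difference is in fact the order of `w` in `u`. -/
lemma order_le [CharZero F] {δF : Derivation ℤ F F} {D : Derivation ℤ E E}
    (hD : ∀ a : F, D (algebraMap F E a) = algebraMap F E (δF a)) {u w : E}
    (hu : DiffTrans F D u) (hw : w ∈ genDF F D {u}) (hwt : DiffTrans F D w)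
    {P Q P' Q' : MvPolynomial ℕ F} (hQ : Q ≠ 0) (hPQ : IsRelPrime P Q)
    (hQ' : Q' ≠ 0) (hPQ' : IsRelPrime P' Q')
    (he : evalD F D u P / evalD F D u Q = evalD F D w P' / evalD F D w Q')
    {n m : ℕ} (hn : max (ordU P) (ordU Q) = (n : WithBot ℕ))
    (hm : max (ordU P') (ordU Q') = (m : WithBot ℕ)) : m ≤ n := by
  choose d h1 h0 using fun k => exists_partial_s18 F hu k
  have hquot : ∀ (k : ℕ) (P Q : MvPolynomial ℕ F), Q ≠ 0 → IsRelPrime P Q →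
      (d k (evalD F D u P / evalD F D u Q) = 0 ↔ k ∉ P.vars ∪ Q.vars) := fun k P Q hQ hPQ =>
    derivation_quot_eq_zero_iff F D (d k) u hu k P Q hQ hPQ (by rw [h1]; exact one_ne_zero)
      fun j _ hj => h0 k j hj
  -- `l` is the order of `w` as a differential rational function of `u`.
  obtain ⟨l, hl0, hl⟩ : ∃ l, d l w ≠ 0 ∧ ∀ k, l < k → d k w = 0 := by
    obtain ⟨G, H, hH, hGH, hwGH⟩ := mem_genDF_singleton F hu hw
    have hne : (G.vars ∪ H.vars).Nonempty := by
      by_contra hne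
      rw [Finset.not_nonempty_iff_eq_empty, Finset.union_eq_empty] at hne
      -- A quotient of constants lies in `F`, but `w` is transcendental over `F`.
      apply hwt.transcendental 0
      rw [Function.iterate_zero, id, hwGH, vars_eq_empty_iff_eq_C.1 hne.1,
        vars_eq_empty_iff_eq_C.1 hne.2]
      simp only [evalD, algHom_C, ← map_div₀]
      exact isAlgebraic_algebraMap _
    refine ⟨(G.vars ∪ H.vars).max' hne, ?_, fun k hk => ?_⟩
    · rw [hwGH, Ne, hquot _ _ _ hH hGH, not_not]
      exact Finset.max'_mem _ _
    · rw [hwGH, hquot _ _ _ hH hGH]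
      exact fun hk' => (Finset.le_max' _ _ hk').not_gt hk
  have hit := partial_iterate_s18 F hD h1 h0 hw hl
  obtain ⟨hm1, hm2⟩ := mem_or_of_max F hm
  obtain ⟨-, hn2⟩ := mem_or_of_max F hn
  by_contra hlt
  -- Since `n < m ≤ l + m`, the left side does not see `D^{l+m} u`, whereas the right side does
  -- through `D^m w`.
  have hz : d (l + m) (evalD F D u P / evalD F D u Q) = 0 :=
    (hquot _ _ _ hQ hPQ).2 fun hk => by have := hn2 _ hk; omega
  rw [he] at hz
  refine (derivation_quot_eq_zero_iff F D (d (l + m)) w hwt m P' Q' hQ' hPQ' ?_ ?_).1 hz hm1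
  · rw [(hit m).1]; exact hl0
  · intro j hj hjm
    have := hm2 j hj
    exact (hit j).2 _ (by omega)

/-! ### Transfer between two generic points of the curve -/

/-- The relation between `F⟨a₁, a₂⟩` and `F⟨b₁, b₂⟩` pairing `G(a)/H(a)` with `G(b)/H(b)`. When `a` and
`b` have the same vanishing ideal it is the graph of the differential `F`-isomorphism sending `aᵢ` to
`bᵢ`. Both denominators are required to be nonzero, which avoids junk quotients. -/
def Corr (D : Derivation ℤ E E) (a₁ a₂ b₁ b₂ : E) (x y : E) : Prop :=
  ∃ G H : MvPolynomial (Fin 2 × ℕ) F, evalD2 F D a₁ a₂ H ≠ 0 ∧ evalD2 F D b₁ b₂ H ≠ 0 ∧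
    x = evalD2 F D a₁ a₂ G / evalD2 F D a₁ a₂ H ∧ y = evalD2 F D b₁ b₂ G / evalD2 F D b₁ b₂ H

lemma derivation_evalD2 {δF : Derivation ℤ F F} {D : Derivation ℤ E E}
    (hD : ∀ a : F, D (algebraMap F E a) = algebraMap F E (δF a))
    {dxy : Derivation ℤ (MvPolynomial (Fin 2 × ℕ) F) (MvPolynomial (Fin 2 × ℕ) F)}
    (hdxyC : ∀ a : F, dxy (C a) = C (δF a))
    (hdxyX : ∀ (i : Fin 2) (k : ℕ), dxy (X (i, k)) = X (i, k + 1)) (a₁ a₂ : E)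
    (B : MvPolynomial (Fin 2 × ℕ) F) :
    D (evalD2 F D a₁ a₂ B) = evalD2 F D a₁ a₂ (dxy B) := by
  induction B using MvPolynomial.induction_on with
  | C a => rw [hdxyC]; simp [evalD2, algHom_C, hD]
  | add p q hp hq => simp only [map_add, hp, hq]
  | mul_X p i hp =>
    obtain ⟨i, k⟩ := i
    have hX : ∀ k, evalD2 F D a₁ a₂ (X (i, k)) = (⇑D)^[k] (if i = 0 then a₁ else a₂) :=
      fun k => by simp [evalD2]
    simp only [map_mul, Derivation.leibniz, smul_eq_mul, map_add, hp, hdxyX, hX,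
      Function.iterate_succ_apply']

namespace Corr
variable {F} {D : Derivation ℤ E E} {a₁ a₂ b₁ b₂ x y x' y' : E}

variable (D a₁ a₂ b₁ b₂) in
lemma of_poly (G : MvPolynomial (Fin 2 × ℕ) F) :
    Corr F D a₁ a₂ b₁ b₂ (evalD2 F D a₁ a₂ G) (evalD2 F D b₁ b₂ G) :=
  ⟨G, 1, by simp, by simp, by simp, by simp⟩

lemma add (h : Corr F D a₁ a₂ b₁ b₂ x y) (h' : Corr F D a₁ a₂ b₁ b₂ x' y') :
    Corr F D a₁ a₂ b₁ b₂ (x + x') (y + y') := by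
  obtain ⟨G, H, ha, hb, rfl, rfl⟩ := h
  obtain ⟨G', H', ha', hb', rfl, rfl⟩ := h'
  refine ⟨G * H' + H * G', H * H', ?_, ?_, ?_, ?_⟩ <;> simp only [map_mul, map_add]
  · exact mul_ne_zero ha ha'
  · exact mul_ne_zero hb hb'
  · exact div_add_div _ _ ha ha'
  · exact div_add_div _ _ hb hb'

lemma mul (h : Corr F D a₁ a₂ b₁ b₂ x y) (h' : Corr F D a₁ a₂ b₁ b₂ x' y') :
    Corr F D a₁ a₂ b₁ b₂ (x * x') (y * y') := by
  obtain ⟨G, H, ha, hb, rfl, rfl⟩ := h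
  obtain ⟨G', H', ha', hb', rfl, rfl⟩ := h'
  refine ⟨G * G', H * H', ?_, ?_, ?_, ?_⟩ <;> simp only [map_mul]
  · exact mul_ne_zero ha ha'
  · exact mul_ne_zero hb hb'
  · exact div_mul_div_comm _ _ _ _
  · exact div_mul_div_comm _ _ _ _

lemma deriv {δF : Derivation ℤ F F}
    (hD : ∀ a : F, D (algebraMap F E a) = algebraMap F E (δF a))
    {dxy : Derivation ℤ (MvPolynomial (Fin 2 × ℕ) F) (MvPolynomial (Fin 2 × ℕ) F)}
    (hdxyC : ∀ a : F, dxy (C a) = C (δF a))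
    (hdxyX : ∀ (i : Fin 2) (k : ℕ), dxy (X (i, k)) = X (i, k + 1))
    (h : Corr F D a₁ a₂ b₁ b₂ x y) : Corr F D a₁ a₂ b₁ b₂ (D x) (D y) := by
  obtain ⟨G, H, ha, hb, rfl, rfl⟩ := h
  refine ⟨H * dxy G - G * dxy H, H ^ 2, ?_, ?_, ?_, ?_⟩ <;>
    simp only [map_mul, map_sub, map_pow, ← derivation_evalD2 F hD hdxyC hdxyX,
      Derivation.leibniz_div, smul_eq_mul]
  · exact pow_ne_zero _ ha
  · exact pow_ne_zero _ hb
  · ring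
  · ring

lemma eq_zero_iff (hI : ∀ B, evalD2 F D a₁ a₂ B = 0 ↔ evalD2 F D b₁ b₂ B = 0)
    (h : Corr F D a₁ a₂ b₁ b₂ x y) : x = 0 ↔ y = 0 := by
  obtain ⟨G, H, ha, hb, rfl, rfl⟩ := h
  simp [ha, hb, hI]

lemma iterate {δF : Derivation ℤ F F}
    (hD : ∀ a : F, D (algebraMap F E a) = algebraMap F E (δF a))
    {dxy : Derivation ℤ (MvPolynomial (Fin 2 × ℕ) F) (MvPolynomial (Fin 2 × ℕ) F)}
    (hdxyC : ∀ a : F, dxy (C a) = C (δF a))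
    (hdxyX : ∀ (i : Fin 2) (k : ℕ), dxy (X (i, k)) = X (i, k + 1))
    (h : Corr F D a₁ a₂ b₁ b₂ x y) (k : ℕ) :
    Corr F D a₁ a₂ b₁ b₂ ((⇑D)^[k] x) ((⇑D)^[k] y) := by
  induction k with
  | zero => exact h
  | succ k ih =>
    rw [Function.iterate_succ_apply', Function.iterate_succ_apply']
    exact ih.deriv hD hdxyC hdxyX

lemma evalD {δF : Derivation ℤ F F}
    (hD : ∀ a : F, D (algebraMap F E a) = algebraMap F E (δF a))
    {dxy : Derivation ℤ (MvPolynomial (Fin 2 × ℕ) F) (MvPolynomial (Fin 2 × ℕ) F)}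
    (hdxyC : ∀ a : F, dxy (C a) = C (δF a))
    (hdxyX : ∀ (i : Fin 2) (k : ℕ), dxy (X (i, k)) = X (i, k + 1))
    (h : Corr F D a₁ a₂ b₁ b₂ x y) (P : MvPolynomial ℕ F) :
    Corr F D a₁ a₂ b₁ b₂ (DiffCurve.evalD F D x P) (DiffCurve.evalD F D y P) := by
  induction P using MvPolynomial.induction_on with
  | C a => simpa [DiffCurve.evalD, evalD2, algHom_C] using of_poly D a₁ a₂ b₁ b₂ (C a)
  | add p q hp hq => rw [map_add, map_add]; exact hp.add hq
  | mul_X p i hp =>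
    rw [map_mul, map_mul]
    refine hp.mul ?_
    simpa [DiffCurve.evalD] using h.iterate hD hdxyC hdxyX i

end Corr

/-- Elements of `F⟨a₁, a₂⟩` can be transferred to `F⟨b₁, b₂⟩`: equality of the vanishing ideals keeps
denominators nonzero. -/
lemma exists_corr {D : Derivation ℤ E E} {a₁ a₂ b₁ b₂ u : E}
    (hI : ∀ B, evalD2 F D a₁ a₂ B = 0 ↔ evalD2 F D b₁ b₂ B = 0)
    (hu : u ∈ genDF F D {a₁, a₂}) :
    ∃ w ∈ genDF F D {b₁, b₂}, Corr F D a₁ a₂ b₁ b₂ u w := by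
  have hX : ∀ (c₁ c₂ : E) (i : Fin 2) (k : ℕ),
      evalD2 F D c₁ c₂ (X (i, k)) = (⇑D)^[k] (if i = 0 then c₁ else c₂) :=
    fun _ _ _ _ => by simp [evalD2]
  have hmem : ∀ B, evalD2 F D b₁ b₂ B ∈ genDF F D {b₁, b₂} := by
    intro B
    induction B using MvPolynomial.induction_on with
    | C a => simp [evalD2, algHom_C]
    | add p q hp hq => rw [map_add]; exact add_mem hp hq
    | mul_X p i hp =>
      rw [map_mul]
      refine mul_mem hp (IntermediateField.subset_adjoin _ _ ⟨_, ?_, i.2, (hX _ _ i.1 i.2).symm⟩)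
      split_ifs <;> simp
  have hset : {x | ∃ s ∈ ({a₁, a₂} : Set E), ∃ k : ℕ, (⇑D)^[k] s = x}
      = Set.range fun p : Fin 2 × ℕ => (⇑D)^[p.2] (if p.1 = 0 then a₁ else a₂) := by
    ext x; simp
  rw [genDF, hset, IntermediateField.mem_adjoin_range_iff] at hu
  obtain ⟨G, H, rfl⟩ := hu
  change ∃ w ∈ _, Corr F D a₁ a₂ b₁ b₂ (evalD2 F D a₁ a₂ G / evalD2 F D a₁ a₂ H) w
  by_cases hH : evalD2 F D a₁ a₂ H = 0
  · refine ⟨0, zero_mem _, ?_⟩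
    rw [hH, div_zero]
    simpa using Corr.of_poly D a₁ a₂ b₁ b₂ (0 : MvPolynomial (Fin 2 × ℕ) F)
  · exact ⟨_, div_mem (hmem G) (hmem H), G, H, hH, (hI H).not.1 hH, rfl, rfl⟩

/-- proper parametrizations have minimal order: if `(u, Pᵢ, Qᵢ)` is any
parametrization of `(C, A)` with orders `n₁, n₂` and `(u, Pᵢ*, Qᵢ*)` is a proper one
with orders `m₁, m₂`, then `m₁ ≤ n₁`, `m₂ ≤ n₂`. -/
theorem proper_param_minimal_order [CharZero F]
    (δF : Derivation ℤ F F) (D : Derivation ℤ E E)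
    (hD : ∀ a : F, D (algebraMap F E a) = algebraMap F E (δF a))
    (dxy : Derivation ℤ (MvPolynomial (Fin 2 × ℕ) F) (MvPolynomial (Fin 2 × ℕ) F))
    (hdxyC : ∀ a : F, dxy (C a) = C (δF a))
    (hdxyX : ∀ (i : Fin 2) (k : ℕ), dxy (X (i, k)) = X (i, k + 1))
    (A : MvPolynomial (Fin 2 × ℕ) F) (hA : Irreducible A)
    (s₁ s₂ : ℕ) (hs₁ : ordIdx 0 A = (s₁ : WithBot ℕ)) (hs₂ : ordIdx 1 A = (s₂ : WithBot ℕ))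
    (u : E) (P₁ Q₁ P₂ Q₂ : MvPolynomial ℕ F)
    (hpar : IsParam F D dxy A u P₁ Q₁ P₂ Q₂)
    (n₁ n₂ : ℕ) (hn₁ : max (ordU P₁) (ordU Q₁) = (n₁ : WithBot ℕ))
    (hn₂ : max (ordU P₂) (ordU Q₂) = (n₂ : WithBot ℕ))
    (P₁' Q₁' P₂' Q₂' : MvPolynomial ℕ F)
    (hproper : IsProperParam F D dxy A u P₁' Q₁' P₂' Q₂')
    (m₁ m₂ : ℕ) (hm₁ : max (ordU P₁') (ordU Q₁') = (m₁ : WithBot ℕ))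
    (hm₂ : max (ordU P₂') (ordU Q₂') = (m₂ : WithBot ℕ)) :
    m₁ ≤ n₁ ∧ m₂ ≤ n₂ ∧ max m₁ m₂ ≤ max n₁ n₂ := by
  obtain ⟨hu, -, hQ₁, hr₁, -, hQ₂, hr₂, -, hset⟩ := hpar
  obtain ⟨⟨-, -, hQ₁', hr₁', -, hQ₂', hr₂', -, hset'⟩, hgen⟩ := hproper
  have hinj : Function.Injective (evalD F D u) := hu
  set a₁ := evalD F D u P₁' / evalD F D u Q₁' with ha₁
  set a₂ := evalD F D u P₂' / evalD F D u Q₂' with ha₂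
  set b₁ := evalD F D u P₁ / evalD F D u Q₁ with hb₁
  set b₂ := evalD F D u P₂ / evalD F D u Q₂ with hb₂
  have hI : ∀ B, evalD2 F D a₁ a₂ B = 0 ↔ evalD2 F D b₁ b₂ B = 0 :=
    fun B => Set.ext_iff.1 (hset'.trans hset.symm) B
  have hmem : ∀ P, evalD F D u P ∈ genDF F D {u} := by
    intro P
    induction P using MvPolynomial.induction_on with
    | C a => simp [evalD, algHom_C]
    | add p q hp hq => rw [map_add]; exact add_mem hp hq
    | mul_X p i hp =>
      rw [map_mul]
      exact mul_mem hp (IntermediateField.subset_adjoin _ _ ⟨u, rfl, i, by simp [evalD]⟩)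
  -- `w` is the image of `u` under the differential isomorphism `F⟨a₁, a₂⟩ ≅ F⟨b₁, b₂⟩`.
  obtain ⟨w, hw, hc⟩ := exists_corr F hI (u := u) (by
    rw [hgen]; exact IntermediateField.subset_adjoin _ _ ⟨u, rfl, 0, rfl⟩)
  have hwu : w ∈ genDF F D {u} := by
    refine genDF_le F hD _ _ ?_ hw
    rintro s (rfl | rfl)
    · exact div_mem (hmem _) (hmem _)
    · exact div_mem (hmem _) (hmem _)
  have hcP := hc.evalD hD hdxyC hdxyX
  have hwt : DiffTrans F D w := by
    refine (injective_iff_map_eq_zero (evalD F D w)).2 fun P hP => ?_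
    exact (map_eq_zero_iff _ hinj).1 (((hcP P).eq_zero_iff hI).2 hP)
  have hwinj : Function.Injective (evalD F D w) := hwt
  have key : ∀ (a b : E) (P Q : MvPolynomial ℕ F), Q ≠ 0 → Corr F D a₁ a₂ b₁ b₂ a b →
      a = evalD F D u P / evalD F D u Q → b = evalD F D w P / evalD F D w Q := by
    intro a b P Q hQ hab ha
    -- Transfer of the relation `a * Q(u) - P(u) = 0`.
    have h1 := ((hab.mul (hcP Q)).add (hcP (-P))).eq_zero_iff hI
    rw [map_neg, map_neg, ← sub_eq_add_neg, ← sub_eq_add_neg, sub_eq_zero, sub_eq_zero] at h1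
    rw [eq_div_iff ((map_ne_zero_iff _ hwinj).2 hQ), ← h1, ha,
      div_mul_cancel₀ _ ((map_ne_zero_iff _ hinj).2 hQ)]
  have hX₁ : Corr F D a₁ a₂ b₁ b₂ a₁ b₁ := by
    simpa [evalD2] using Corr.of_poly D a₁ a₂ b₁ b₂ (X (0, 0) : MvPolynomial (Fin 2 × ℕ) F)
  have hX₂ : Corr F D a₁ a₂ b₁ b₂ a₂ b₂ := by
    simpa [evalD2] using Corr.of_poly D a₁ a₂ b₁ b₂ (X (1, 0) : MvPolynomial (Fin 2 × ℕ) F)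
  have e₁ := key a₁ b₁ P₁' Q₁' hQ₁' hX₁ ha₁
  have e₂ := key a₂ b₂ P₂' Q₂' hQ₂' hX₂ ha₂
  have l₁ := order_le F hD hu hwu hwt hQ₁ hr₁ hQ₁' hr₁' e₁ hn₁ hm₁
  have l₂ := order_le F hD hu hwu hwt hQ₂ hr₂ hQ₂' hr₂' e₂ hn₂ hm₂
  exact ⟨l₁, l₂, max_le_max l₁ l₂⟩
end DiffCurve
end
end
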